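/- (Partial oscillator death: absorption of further oscillators) Let (θ_1,...,θ_N) be a global solution of the Winfree model of order n, let p be an integer with 2 ≤ p ≤ N, and assume: 0 < α < π, |θ_i(0)| < α for every i ∈ {1,...,p}, and κ > (N/p) · (max_i |ν_i|)/(a_n sin α (1 + cos α)^n). If for some index i ∈ {p+1,...,N} there exists t* ≥ 0 with |θ_i(t*)| < α, then |θ_i(t)| < α for all t ≥ t*. -/

import Mathlib

/-!
On the face `θ_i = ±α` the coupling pushes oscillator `i` inwards with force
`(κ/N) sin α Σ_j I_n(θ_j)`. While the `p` initially trapped phases stay in `[-α, α]` the sum is at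
least `p I_n(α)`, as `I_n` decreases in `|θ|`, so the force beats every natural frequency. There is
thus no first time at which a trapped phase reaches the boundary, and once all of them are known to
stay inside forever, the same barrier argument applies to any single further oscillator.
-/

open Real Filter

/-- Normalizing constant `a_n = 2^n (n!)^2 / (2n)!`. -/
noncomputable def aW (n : ℕ) : ℝ :=
  2 ^ n * (Nat.factorial n : ℝ) ^ 2 / (Nat.factorial (2 * n) : ℝ)

/-- Influence function `I_n(θ) = a_n (1 + cos θ)^n`. -/
noncomputable def influence (n : ℕ) (θ : ℝ) : ℝ := aW n * (1 + Real.cos θ) ^ n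

/-- Sensitivity function `S(θ) = -sin θ`. -/
noncomputable def sens (θ : ℝ) : ℝ := -Real.sin θ

/-- A global solution of the Winfree model of order `n` with `N` oscillators,
natural frequencies `ν` and coupling strength `κ`:
`θ_i'(t) = ν_i + (κ/N) S(θ_i(t)) Σ_j I_n(θ_j(t))` for all `t ≥ 0`. -/
def IsWinfreeSol (n N : ℕ) (ν : Fin N → ℝ) (κ : ℝ) (θ : Fin N → ℝ → ℝ) : Prop :=
  ∀ i : Fin N, ∀ t : ℝ, 0 ≤ t →
    HasDerivAt (θ i)
      (ν i + (κ / N) * sens (θ i t) * ∑ j : Fin N, influence n (θ j t)) t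

section Barrier

variable {ι : Type*} [Finite ι] {f f' : ι → ℝ → ℝ} {c : ι → ℝ} {a b : ℝ}

lemma hasDerivWithinAt_nonneg_of_isMaxOn_Icc {g : ℝ → ℝ} {g' : ℝ} (hab : a < b)
    (hg : HasDerivWithinAt g g' (Set.Icc a b) b) (hmax : IsMaxOn g (Set.Icc a b) b) : 0 ≤ g' := by
  have hcone : a - b ∈ posTangentConeAt (Set.Icc a b) b :=
    sub_mem_posTangentConeAt_of_segment_subset (by rw [segment_symm, segment_eq_Icc hab.le])
  have hslope : (a - b) * g' ≤ 0 := by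
    simpa using hmax.localize.hasFDerivWithinAt_nonpos hg.hasFDerivWithinAt hcone
  exact nonneg_of_mul_nonpos_right hslope (sub_neg.2 hab)

lemma exists_first_hitting_time (hf : ∀ i, ContinuousOn (f i) (Set.Icc a b))
    (ha : ∀ i, f i a < c i) (hab : a ≤ b) (hb : ∃ i, c i ≤ f i b) :
    ∃ s ∈ Set.Ioc a b, (∀ u ∈ Set.Icc a s, ∀ i, f i u ≤ c i) ∧ ∃ i, f i s = c i := by
  let hit : Set ℝ := ⋃ i, Set.Icc a b ∩ f i ⁻¹' Set.Ici (c i)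
  have hclosed : IsClosed hit := isClosed_iUnion_of_finite fun i ↦
    (hf i).preimage_isClosed_of_isClosed isClosed_Icc isClosed_Ici
  have hcompact : IsCompact hit := isCompact_Icc.of_isClosed_subset hclosed
    (Set.iUnion_subset fun _ ↦ Set.inter_subset_left)
  obtain ⟨j, hj⟩ := hb
  obtain ⟨s, hs, hleast⟩ :=
    hcompact.exists_isLeast ⟨b, Set.mem_iUnion.2 ⟨j, Set.right_mem_Icc.2 hab, hj⟩⟩
  obtain ⟨i, hsab, hi : c i ≤ f i s⟩ := Set.mem_iUnion.1 hs
  have has : a < s := hsab.1.lt_of_ne (by rintro rfl; exact (ha i).not_ge hi)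
  have hbefore : ∀ u ∈ Set.Ico a s, ∀ k, f k u < c k := fun u hu k ↦ by
    by_contra! hk
    exact hu.2.not_ge (hleast (Set.mem_iUnion.2 ⟨k, ⟨hu.1, hu.2.le.trans hsab.2⟩, hk⟩))
  have hupto : ∀ u ∈ Set.Icc a s, ∀ k, f k u ≤ c k := fun u hu k ↦ by
    have hcont : ContinuousOn (f k) (closure (Set.Ico a s)) := by
      rw [closure_Ico has.ne]
      exact (hf k).mono (Set.Icc_subset_Icc_right hsab.2)
    refine le_on_closure (fun v hv ↦ (hbefore v hv k).le) hcont continuousOn_const ?_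
    rwa [closure_Ico has.ne]
  exact ⟨s, ⟨has, hsab.2⟩, hupto, i, (hupto s (Set.right_mem_Icc.2 has.le) i).antisymm hi⟩

lemma forall_lt_of_deriv_neg_of_eq
    (hf : ∀ i, ∀ t, a ≤ t → HasDerivWithinAt (f i) (f' i t) (Set.Ici a) t)
    (ha : ∀ i, f i a < c i)
    (hf' : ∀ t, a < t → (∀ i, f i t ≤ c i) → ∀ i, f i t = c i → f' i t < 0)
    {t : ℝ} (ht : a ≤ t) (i : ι) : f i t < c i := by
  by_contra! hi
  have hcont : ∀ k, ContinuousOn (f k) (Set.Icc a t) := fun k u hu ↦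
    (hf k u hu.1).continuousWithinAt.mono Set.Icc_subset_Ici_self
  obtain ⟨s, ⟨has, -⟩, hle, k, hk⟩ := exists_first_hitting_time hcont ha ht ⟨i, hi⟩
  have hmax : IsMaxOn (f k) (Set.Icc a s) s := fun u hu ↦ (hle u hu k).trans_eq hk.symm
  have hnonneg : 0 ≤ f' k s := hasDerivWithinAt_nonneg_of_isMaxOn_Icc has
    ((hf k s has.le).mono Set.Icc_subset_Ici_self) hmax
  exact hnonneg.not_gt (hf' s has (hle s (Set.right_mem_Icc.2 has.le)) k hk)

lemma forall_abs_lt_of_deriv_inward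
    (hf : ∀ i, ∀ t, a ≤ t → HasDerivWithinAt (f i) (f' i t) (Set.Ici a) t)
    (ha : ∀ i, |f i a| < c i)
    (hneg : ∀ t, a < t → (∀ i, |f i t| ≤ c i) → ∀ i, f i t = c i → f' i t < 0)
    (hpos : ∀ t, a < t → (∀ i, |f i t| ≤ c i) → ∀ i, f i t = -c i → 0 < f' i t)
    {t : ℝ} (ht : a ≤ t) (i : ι) : |f i t| < c i := by
  have hbox : ∀ k : ι ⊕ ι, Sum.elim f (-f) k t < Sum.elim c c k := by
    refine forall_lt_of_deriv_neg_of_eq (f' := Sum.elim f' (-f')) ?_ ?_ ?_ ht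
    · rintro (k | k) u hu
      exacts [hf k u hu, (hf k u hu).neg]
    · rintro (k | k)
      exacts [(abs_lt.1 (ha k)).2, neg_lt.1 (abs_lt.1 (ha k)).1]
    · intro u hu hle
      have habs : ∀ k, |f k u| ≤ c k := fun k ↦ abs_le'.2 ⟨hle (.inl k), hle (.inr k)⟩
      rintro (k | k) hk
      exacts [hneg u hu habs k hk, neg_neg_of_pos (hpos u hu habs k (neg_eq_iff_eq_neg.1 hk))]
  exact abs_lt.2 ⟨neg_lt.1 (hbox (.inr i)), hbox (.inl i)⟩

end Barrier

section Influence

variable {n : ℕ} {α : ℝ}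

lemma aW_pos (n : ℕ) : 0 < aW n := by
  unfold aW
  positivity

lemma influence_nonneg (n : ℕ) (x : ℝ) : 0 ≤ influence n x :=
  mul_nonneg (aW_pos n).le (pow_nonneg (by linarith [neg_one_le_cos x]) n)

lemma influence_pos {x : ℝ} (hx : |x| < π) : 0 < influence n x := by
  have hcos : -1 < cos x := by
    simpa using cos_lt_cos_of_nonneg_of_le_pi (abs_nonneg x) le_rfl hx
  exact mul_pos (aW_pos n) (pow_pos (by linarith) n)

lemma influence_le_influence_of_abs_le {x : ℝ} (hx : |x| ≤ α) (hα : α ≤ π) :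
    influence n α ≤ influence n x := by
  have hcos : cos α ≤ cos x := by
    simpa using cos_le_cos_of_nonneg_of_le_pi (abs_nonneg x) hα hx
  exact mul_le_mul_of_nonneg_left
    (pow_le_pow_left₀ (by linarith [neg_one_le_cos α]) (by linarith) n) (aW_pos n).le

variable {ι : Type*} [Fintype ι] {P : Finset ι} {x : ι → ℝ}

lemma card_mul_influence_le_sum (hx : ∀ j ∈ P, |x j| ≤ α) (hα : α ≤ π) :
    P.card * influence n α ≤ ∑ j, influence n (x j) :=
  calc
    P.card * influence n α = P.card • influence n α := (nsmul_eq_mul _ _).symm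
    _ ≤ ∑ j ∈ P, influence n (x j) := Finset.card_nsmul_le_sum _ _ _ fun j hj ↦
      influence_le_influence_of_abs_le (hx j hj) hα
    _ ≤ ∑ j, influence n (x j) := Finset.sum_le_univ_sum_of_nonneg fun j ↦ influence_nonneg n (x j)

lemma abs_lt_mul_sum_influence {ω K : ℝ} (hx : ∀ j ∈ P, |x j| ≤ α) (hα : α ≤ π)
    (hω : |ω| < K * (P.card * influence n α)) : |ω| < K * ∑ j, influence n (x j) := by
  have hK : 0 < K := pos_of_mul_pos_left ((abs_nonneg ω).trans_lt hω)
    (mul_nonneg P.card.cast_nonneg (influence_nonneg n α))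
  exact hω.trans_le (mul_le_mul_of_nonneg_left (card_mul_influence_le_sum hx hα) hK.le)

end Influence

section Winfree

variable {n N : ℕ} {κ α : ℝ} {ν : Fin N → ℝ} {P : Finset (Fin N)} {i : Fin N}

/-- The velocity `ν_i + (κ/N) S(x_i) Σ_j I_n(x_j)` of oscillator `i` when the phases are `x`: the
right-hand side of the Winfree model. -/
noncomputable def winfreeVelocity (n : ℕ) (κ : ℝ) (ν x : Fin N → ℝ) (i : Fin N) : ℝ :=
  ν i + (κ / N) * sens (x i) * ∑ j, influence n (x j)

lemma winfreeVelocity_neg {x : Fin N → ℝ} (hx : ∀ j ∈ P, |x j| ≤ α) (hα : α ≤ π)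
    (hν : |ν i| < κ / N * sin α * (P.card * influence n α)) (hi : x i = α) :
    winfreeVelocity n κ ν x i < 0 := by
  have hforce := (abs_lt.1 (abs_lt_mul_sum_influence hx hα hν)).2
  rw [winfreeVelocity, sens, hi]
  linarith

lemma winfreeVelocity_pos {x : Fin N → ℝ} (hx : ∀ j ∈ P, |x j| ≤ α) (hα : α ≤ π)
    (hν : |ν i| < κ / N * sin α * (P.card * influence n α)) (hi : x i = -α) :
    0 < winfreeVelocity n κ ν x i := by
  have hforce := (abs_lt.1 (abs_lt_mul_sum_influence hx hα hν)).1
  rw [winfreeVelocity, sens, hi, sin_neg]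
  linarith

lemma lt_mul_card_mul_influence {ω : ℝ} [NeZero N] (hP : P.Nonempty) (hα0 : 0 < α) (hαπ : α < π)
    (hκ : (N : ℝ) / P.card * ω / (aW n * sin α * (1 + cos α) ^ n) < κ) :
    ω < κ / N * sin α * (P.card * influence n α) := by
  have hN : (0 : ℝ) < N := Nat.cast_pos.2 (NeZero.pos N)
  have hcard : (0 : ℝ) < P.card := Nat.cast_pos.2 hP.card_pos
  have hforce : 0 < sin α * influence n α := mul_pos (sin_pos_of_pos_of_lt_pi hα0 hαπ)
    (influence_pos (by rwa [abs_of_pos hα0]))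
  have hden : aW n * sin α * (1 + cos α) ^ n = sin α * influence n α := by
    rw [influence]; ring
  rw [hden, div_lt_iff₀ hforce, div_mul_eq_mul_div, div_lt_iff₀ hcard] at hκ
  rw [mul_assoc, div_mul_eq_mul_div, lt_div_iff₀ hN]
  linarith

variable {θ : Fin N → ℝ → ℝ}

namespace IsWinfreeSol

lemma hasDerivWithinAt (hθ : IsWinfreeSol n N ν κ θ) (i : Fin N) {a : ℝ} (ha : 0 ≤ a) (t : ℝ)
    (ht : a ≤ t) :
    HasDerivWithinAt (θ i) (winfreeVelocity n κ ν (θ · t) i) (Set.Ici a) t :=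
  (hθ i t (ha.trans ht)).hasDerivWithinAt

lemma abs_lt_of_mem (hθ : IsWinfreeSol n N ν κ θ) (hα : α ≤ π)
    (hinit : ∀ j ∈ P, |θ j 0| < α)
    (hν : ∀ j ∈ P, |ν j| < κ / N * sin α * (P.card * influence n α))
    {t : ℝ} (ht : 0 ≤ t) {j : Fin N} (hj : j ∈ P) : |θ j t| < α :=
  forall_abs_lt_of_deriv_inward (f := fun k : P ↦ θ k)
    (fun k ↦ hθ.hasDerivWithinAt k le_rfl) (fun k ↦ hinit k k.2)
    (fun u _ hle k ↦ winfreeVelocity_neg (x := (θ · u)) (fun l hl ↦ hle ⟨l, hl⟩) hα (hν k k.2))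
    (fun u _ hle k ↦ winfreeVelocity_pos (x := (θ · u)) (fun l hl ↦ hle ⟨l, hl⟩) hα (hν k k.2))
    ht ⟨j, hj⟩

lemma abs_lt_of_abs_lt (hθ : IsWinfreeSol n N ν κ θ) (hα : α ≤ π) {a : ℝ} (ha : 0 ≤ a)
    (hP : ∀ t, a ≤ t → ∀ j ∈ P, |θ j t| ≤ α)
    (hν : |ν i| < κ / N * sin α * (P.card * influence n α)) (hi : |θ i a| < α)
    {t : ℝ} (ht : a ≤ t) : |θ i t| < α :=
  forall_abs_lt_of_deriv_inward (f := fun _ : Unit ↦ θ i) (fun _ ↦ hθ.hasDerivWithinAt i ha)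
    (fun _ ↦ hi) (fun u hu _ _ ↦ winfreeVelocity_neg (hP u hu.le) hα hν)
    (fun u hu _ _ ↦ winfreeVelocity_pos (hP u hu.le) hα hν) ht ()

end IsWinfreeSol

theorem stmt12_general (hθ : IsWinfreeSol n N ν κ θ) (hP : P.Nonempty) (hαπ : α < π)
    (hinit : ∀ j ∈ P, |θ j 0| < α) {V : ℝ} (hV : ∀ j ∈ insert i P, |ν j| ≤ V)
    (hκ : (N : ℝ) / P.card * V / (aW n * sin α * (1 + cos α) ^ n) < κ)
    {tstar : ℝ} (htstar : 0 ≤ tstar) (hstart : |θ i tstar| < α) {t : ℝ} (ht : tstar ≤ t) :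
    |θ i t| < α := by
  have : NeZero N := ⟨i.pos.ne'⟩
  have hα0 : 0 < α := (abs_nonneg _).trans_lt hstart
  have hν : ∀ j ∈ insert i P, |ν j| < κ / N * sin α * (P.card * influence n α) := fun j hj ↦
    (hV j hj).trans_lt (lt_mul_card_mul_influence hP hα0 hαπ hκ)
  have hdeath : ∀ u, tstar ≤ u → ∀ j ∈ P, |θ j u| ≤ α := fun u hu j hj ↦
    (hθ.abs_lt_of_mem hαπ.le hinit (fun k hk ↦ hν k (Finset.mem_insert_of_mem hk))
      (htstar.trans hu) hj).le
  exact hθ.abs_lt_of_abs_lt hαπ.le htstar hdeath (hν i (Finset.mem_insert_self i P)) hstart ht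

end Winfree

/-- Partial oscillator death (absorption of further oscillators): under the partial
death framework, any other oscillator that enters `(-α, α)` at some time `t* ≥ 0`
stays in `(-α, α)` for all later times. -/
theorem stmt12 (n N p : ℕ) (hn : 0 < n) [NeZero N] (hp2 : 2 ≤ p) (hpN : p ≤ N)
    (ν : Fin N → ℝ) (κ : ℝ) (θ : Fin N → ℝ → ℝ) (hθ : IsWinfreeSol n N ν κ θ)
    (α : ℝ) (hα0 : 0 < α) (hαπ : α < Real.pi)
    (hinit : ∀ i : Fin N, (i : ℕ) < p → |θ i 0| < α)
    (hκ : ((N : ℝ) / p) * (⨆ i : Fin N, |ν i|) /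
            (aW n * Real.sin α * (1 + Real.cos α) ^ n) < κ)
    (i : Fin N) (hi : p ≤ (i : ℕ))
    (tstar : ℝ) (htstar : 0 ≤ tstar) (hstart : |θ i tstar| < α) :
    ∀ t : ℝ, tstar ≤ t → |θ i t| < α := by
  let P : Finset (Fin N) := Finset.univ.filter fun j ↦ (j : ℕ) < p
  have hcard : P.card = p := Fin.card_filter_val_lt.trans (min_eq_right hpN)
  have hP : P.Nonempty := Finset.card_pos.1 (by omega)
  exact fun t ↦ stmt12_general hθ hP hαπ (by simpa [P] using hinit)
    (fun j _ ↦ le_ciSup (Set.finite_range fun j ↦ |ν j|).bddAbove j) (by rwa [hcard]) htstar hstart
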